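/- arXiv:1902.02024 — 4 statements merged into one kernel-verified Lean document; each statement's English description precedes it below -/
import Mathlib

section
/- Let ℓ, β ∈ ℝ and let s : ℝ → ℝ be a function differentiable at α₀ which satisfies cos β = -cos α · cos(s(α) - α) + sin α · sin(s(α) - α) · cos ℓ for all α in some neighborhood of α₀. If s'(α₀) = 0, then (1 - cos ℓ) · sin(2α₀ - s(α₀)) = 0. -/
open Real

theorem stmt_1 (ℓ β α₀ : ℝ) (s : ℝ → ℝ)
    (hdiff : DifferentiableAt ℝ s α₀)
    (hrel : ∀ᶠ α in nhds α₀,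
      Real.cos β = -Real.cos α * Real.cos (s α - α)
        + Real.sin α * Real.sin (s α - α) * Real.cos ℓ)
    (hcrit : deriv s α₀ = 0) :
    (1 - Real.cos ℓ) * Real.sin (2 * α₀ - s α₀) = 0 := by
  have hs : HasDerivAt s 0 α₀ := hcrit ▸ hdiff.hasDerivAt
  have hb : HasDerivAt (fun α => s α - α) (0 - 1) α₀ := hs.sub (hasDerivAt_id' α₀)
  have h1 : HasDerivAt (fun α => -Real.cos α * Real.cos (s α - α)
        + Real.sin α * Real.sin (s α - α) * Real.cos ℓ) _ α₀ :=
    ((Real.hasDerivAt_cos α₀).neg.mul hb.cos).add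
      (((Real.hasDerivAt_sin α₀).mul hb.sin).mul_const (Real.cos ℓ))
  have h2 : HasDerivAt (fun α => -Real.cos α * Real.cos (s α - α)
        + Real.sin α * Real.sin (s α - α) * Real.cos ℓ) 0 α₀ :=
    (hasDerivAt_const α₀ (Real.cos β)).congr_of_eventuallyEq
      (hrel.mono fun _ h => h.symm)
  have h3 := h1.unique h2
  have h4 : 2 * α₀ - s α₀ = α₀ - (s α₀ - α₀) := by ring
  rw [h4, Real.sin_sub α₀]
  simp only [Pi.neg_apply] at h3
  linear_combination h3
end

section
/- Let ℓ, β ∈ ℝ with cos ℓ ≠ 1, and let s : ℝ → ℝ be a function differentiable at α₀ which satisfies cos β = -cos α · cos(s(α) - α) + sin α · sin(s(α) - α) · cos ℓ for all α in some neighborhood of α₀. If s'(α₀) = 0 and 2α₀ - s(α₀) ∈ (-π, π), then s(α₀) = 2α₀; that is, any critical point of the angle-sum function corresponds to an isosceles spherical triangle. -/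
open Real

theorem stmt_2 (ℓ β α₀ : ℝ) (s : ℝ → ℝ)
    (hℓ : Real.cos ℓ ≠ 1)
    (hdiff : DifferentiableAt ℝ s α₀)
    (hrel : ∀ᶠ α in nhds α₀,
      Real.cos β = -Real.cos α * Real.cos (s α - α)
        + Real.sin α * Real.sin (s α - α) * Real.cos ℓ)
    (hcrit : deriv s α₀ = 0)
    (hrange : 2 * α₀ - s α₀ ∈ Set.Ioo (-Real.pi) Real.pi) :
    s α₀ = 2 * α₀ := by
  have hs : HasDerivAt s 0 α₀ := hcrit ▸ hdiff.hasDerivAt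
  have hd : HasDerivAt (fun α => s α - α) (0 - 1) α₀ := hs.sub (hasDerivAt_id α₀)
  have h1 := ((Real.hasDerivAt_cos α₀).neg.mul hd.cos).add
    (((Real.hasDerivAt_sin α₀).mul hd.sin).mul_const (Real.cos ℓ))
  have h2 : HasDerivAt (fun _ : ℝ => Real.cos β) 0 α₀ := hasDerivAt_const _ _
  have h3 := (h1.congr_of_eventuallyEq hrel).unique h2
  have h4 : (1 - Real.cos ℓ) * Real.sin (α₀ - (s α₀ - α₀)) = 0 := by
    rw [Real.sin_sub]
    simp only [Pi.neg_apply] at h3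
    linear_combination h3
  have h5 : Real.sin (α₀ - (s α₀ - α₀)) = 0 :=
    (mul_eq_zero.mp h4).resolve_left (fun h => hℓ (by linarith))
  have h6 := (Real.sin_eq_zero_iff_of_lt_of_lt (by linarith [hrange.1])
    (by linarith [hrange.2])).mp h5
  linarith
end

section
/- Let ℓ, β ∈ ℝ and let s : ℝ → ℝ be a function differentiable at α₀ which satisfies cos β = -cos α · cos(s(α) - α) + sin α · sin(s(α) - α) · cos ℓ for all α in some neighborhood of α₀. If D := cos α₀ · sin(s(α₀) - α₀) + sin α₀ · cos(s(α₀) - α₀) · cos ℓ is nonzero, then s'(α₀) = 1 - (sin α₀ · cos(s(α₀) - α₀) + cos α₀ · sin(s(α₀) - α₀) · cos ℓ) / D. -/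
open Real

theorem stmt_3 (ℓ β α₀ : ℝ) (s : ℝ → ℝ)
    (hdiff : DifferentiableAt ℝ s α₀)
    (hrel : ∀ᶠ α in nhds α₀,
      Real.cos β = -Real.cos α * Real.cos (s α - α)
        + Real.sin α * Real.sin (s α - α) * Real.cos ℓ)
    (hD : Real.cos α₀ * Real.sin (s α₀ - α₀)
        + Real.sin α₀ * Real.cos (s α₀ - α₀) * Real.cos ℓ ≠ 0) :
    deriv s α₀ = 1 -
      (Real.sin α₀ * Real.cos (s α₀ - α₀)
        + Real.cos α₀ * Real.sin (s α₀ - α₀) * Real.cos ℓ) /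
      (Real.cos α₀ * Real.sin (s α₀ - α₀)
        + Real.sin α₀ * Real.cos (s α₀ - α₀) * Real.cos ℓ) := by
  have hb : HasDerivAt (fun α => s α - α) (deriv s α₀ - 1) α₀ :=
    hdiff.hasDerivAt.sub (hasDerivAt_id' α₀)
  have h1 := (((Real.hasDerivAt_cos α₀).fun_neg).fun_mul hb.cos).fun_add
    ((((Real.hasDerivAt_sin α₀).fun_mul hb.sin)).mul_const (Real.cos ℓ))
  have h2 := (hasDerivAt_const α₀ (Real.cos β)).congr_of_eventuallyEq
    (hrel.mono fun _ h => h.symm)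
  have h3 := h1.unique h2
  rw [eq_sub_iff_add_eq, ← eq_sub_iff_add_eq', div_eq_iff hD]
  linear_combination h3
end

section
/- Let ℓ, β ∈ ℝ with cos ℓ ≠ -1, and let s : ℝ → ℝ be a function differentiable at α₀ which satisfies cos β = -cos α · cos(s(α) - α) + sin α · sin(s(α) - α) · cos ℓ for all α in some neighborhood of α₀. If s(α₀) = 2α₀, α₀ ∈ (0, π) and α₀ ≠ π/2, then s'(α₀) = 0; that is, the isosceles configuration is a critical point of the angle-sum function. -/
open Real

theorem stmt_4 (ℓ β α₀ : ℝ) (s : ℝ → ℝ)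
    (hℓ : Real.cos ℓ ≠ -1)
    (hdiff : DifferentiableAt ℝ s α₀)
    (hrel : ∀ᶠ α in nhds α₀,
      Real.cos β = -Real.cos α * Real.cos (s α - α)
        + Real.sin α * Real.sin (s α - α) * Real.cos ℓ)
    (hiso : s α₀ = 2 * α₀)
    (hα : α₀ ∈ Set.Ioo 0 Real.pi)
    (hne : α₀ ≠ Real.pi / 2) :
    deriv s α₀ = 0 := by
  have hs : HasDerivAt s (deriv s α₀) α₀ := hdiff.hasDerivAt
  generalize deriv s α₀ = d at hs ⊢
  have hb : HasDerivAt (fun α => s α - α) (d - 1) α₀ := hs.sub (hasDerivAt_id α₀)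
  have h1 := ((Real.hasDerivAt_cos α₀).neg.mul hb.cos).add
    (((Real.hasDerivAt_sin α₀).mul hb.sin).mul_const (Real.cos ℓ))
  have h2 := (hasDerivAt_const α₀ (Real.cos β)).congr_of_eventuallyEq
    (hrel.mono fun α h => h.symm)
  have h3 := h1.unique h2
  have hb0 : s α₀ - α₀ = α₀ := by rw [hiso]; ring
  simp only [hb0, Pi.neg_apply] at h3
  have hsin : Real.sin α₀ ≠ 0 := (Real.sin_pos_of_mem_Ioo hα).ne'
  have hcos : Real.cos α₀ ≠ 0 := by
    intro h
    apply hne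
    apply Real.injOn_cos ⟨hα.1.le, hα.2.le⟩
      ⟨by linarith [Real.pi_pos], by linarith [Real.pi_pos]⟩
    rw [h, Real.cos_pi_div_two]
  have hl : 1 + Real.cos ℓ ≠ 0 := fun h => hℓ (by linarith)
  have h4 : (Real.sin α₀ * Real.cos α₀ * (1 + Real.cos ℓ)) * d = 0 := by
    linear_combination h3
  exact (mul_eq_zero.mp h4).resolve_left (mul_ne_zero (mul_ne_zero hsin hcos) hl)
end
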